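/- Let U*, U ∈ ℝ^{n×r} and V*, V ∈ ℝ^{m×r}, and set W = [U;V], Ŵ = [U;−V], W* = [U*;V*], Ŵ* = [U*;−V*]. If (Ŵ*)ᵀW* = 0, then ‖ŴᵀW‖_F ≤ (‖W‖_F + ‖W*‖_F)·dist(W,W*). -/

import Mathlib

/-!
Write `W = [U;V]`, `Ŵ = [U;-V]`, and likewise for `Us`, `Vs`. For orthogonal `R`, put
`D = W - Ws R`; its hatted matrix is `D̂ = Ŵ - Ŵs R`. Since `(Ŵs R)ᵀ (Ws R) = Rᵀ (Ŵsᵀ Ws) R = 0`,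
`Ŵᵀ W = Ŵᵀ D + D̂ᵀ (Ws R)`.
Submultiplicativity of the Frobenius norm, and its invariance under flipping the sign of the lower
block and under right multiplication by `R`, bound this by `(‖W‖ + ‖Ws‖) ‖D‖`. The infimum over `R`
gives the claim.
-/

open scoped Matrix

attribute [local instance] Matrix.frobeniusNormedAddCommGroup Matrix.frobeniusNormedSpace

/-- The Frobenius inner product `⟨A, B⟩ = trace (Aᵀ B)`. -/
noncomputable def finner {ι κ : Type*} [Fintype ι] [Fintype κ]
    (A B : Matrix ι κ ℝ) : ℝ :=
  Matrix.trace (Aᵀ * B)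

/-- The Frobenius norm. -/
noncomputable def fnorm {ι κ : Type*} [Fintype ι] [Fintype κ]
    (A : Matrix ι κ ℝ) : ℝ :=
  Real.sqrt (finner A A)

/-- `dist(Z¹,Z²) = min_{R ∈ O_r} ‖Z¹ − Z²R‖_F`. -/
noncomputable def mdist {ι : Type*} [Fintype ι] {r : ℕ}
    (Z₁ Z₂ : Matrix ι (Fin r) ℝ) : ℝ :=
  ⨅ R : {R : Matrix (Fin r) (Fin r) ℝ // Rᵀ * R = 1},
    fnorm (Z₁ - Z₂ * (R : Matrix (Fin r) (Fin r) ℝ))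

/-- `fnorm` is Mathlib's Frobenius norm, which gives access to the triangle inequality and
submultiplicativity. -/
lemma fnorm_eq_norm {ι κ : Type*} [Fintype ι] [Fintype κ] (A : Matrix ι κ ℝ) :
    fnorm A = ‖A‖ := by
  rw [fnorm, Matrix.frobenius_norm_def, Real.sqrt_eq_rpow, finner]
  congr 1
  simp only [Matrix.trace, Matrix.diag, Matrix.mul_apply, Matrix.transpose_apply]
  rw [Finset.sum_comm]
  refine Finset.sum_congr rfl fun i _ => Finset.sum_congr rfl fun j _ => ?_
  rw [Real.rpow_two, Real.norm_eq_abs, sq_abs, sq]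

lemma fnorm_fromRows_neg {n m r : ℕ}
    (A : Matrix (Fin n) (Fin r) ℝ) (B : Matrix (Fin m) (Fin r) ℝ) :
    fnorm (Matrix.fromRows A (-B)) = fnorm (Matrix.fromRows A B) := by
  simp [fnorm, finner, Matrix.transpose_fromRows, Matrix.fromCols_mul_fromRows]

lemma fnorm_mul_orthogonal {ι : Type*} [Fintype ι] {r : ℕ} (A : Matrix ι (Fin r) ℝ)
    {R : Matrix (Fin r) (Fin r) ℝ} (hR : Rᵀ * R = 1) : fnorm (A * R) = fnorm A := by
  have hR' : R * Rᵀ = 1 := mul_eq_one_comm.mp hR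
  rw [fnorm, fnorm, finner, finner, Matrix.transpose_mul, Matrix.mul_assoc, Matrix.trace_mul_comm,
    ← Matrix.mul_assoc, Matrix.mul_assoc, hR', Matrix.mul_one]

theorem stmt7 {n m r : ℕ}
    (Us U : Matrix (Fin n) (Fin r) ℝ) (Vs V : Matrix (Fin m) (Fin r) ℝ)
    (horth : (Matrix.fromRows Us (-Vs))ᵀ * Matrix.fromRows Us Vs = 0) :
    fnorm ((Matrix.fromRows U (-V))ᵀ * Matrix.fromRows U V)
      ≤ (fnorm (Matrix.fromRows U V) + fnorm (Matrix.fromRows Us Vs))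
          * mdist (Matrix.fromRows U V) (Matrix.fromRows Us Vs) := by
  have hc : 0 ≤ fnorm (Matrix.fromRows U V) + fnorm (Matrix.fromRows Us Vs) :=
    add_nonneg (Real.sqrt_nonneg _) (Real.sqrt_nonneg _)
  -- The infimum over an empty index type would be the junk value `0`; `R = 1` rules this out.
  haveI : Nonempty {R : Matrix (Fin r) (Fin r) ℝ // Rᵀ * R = 1} := ⟨⟨1, by simp⟩⟩
  rw [mdist, Real.mul_iInf_of_nonneg hc]
  refine le_ciInf fun ⟨R, hR⟩ => ?_
  have hD : fnorm (Matrix.fromRows U (-V) - Matrix.fromRows Us (-Vs) * R)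
      = fnorm (Matrix.fromRows U V - Matrix.fromRows Us Vs * R) := by
    have h1 : Matrix.fromRows U (-V) - Matrix.fromRows Us (-Vs) * R
        = Matrix.fromRows (U - Us * R) (-(V - Vs * R)) := by
      ext (i | i) j <;> simp [Matrix.fromRows_mul] <;> ring
    have h2 : Matrix.fromRows U V - Matrix.fromRows Us Vs * R
        = Matrix.fromRows (U - Us * R) (V - Vs * R) := by
      ext (i | i) j <;> simp [Matrix.fromRows_mul]
    rw [h1, h2, fnorm_fromRows_neg]
  have hW := fnorm_fromRows_neg U V
  have hWs := fnorm_mul_orthogonal (Matrix.fromRows Us Vs) hR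
  generalize Matrix.fromRows U (-V) = Wh at *
  generalize Matrix.fromRows Us (-Vs) = Wsh at *
  generalize Matrix.fromRows U V = W at *
  generalize Matrix.fromRows Us Vs = Ws at *
  have hz : (Wsh * R)ᵀ * (Ws * R) = 0 := by
    rw [Matrix.transpose_mul, Matrix.mul_assoc, ← Matrix.mul_assoc Wshᵀ, horth,
      Matrix.zero_mul, Matrix.mul_zero]
  have key : Whᵀ * W = Whᵀ * (W - Ws * R) + (Wh - Wsh * R)ᵀ * (Ws * R) := by
    rw [Matrix.transpose_sub, Matrix.sub_mul, Matrix.mul_sub, hz]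
    abel
  simp only [fnorm_eq_norm] at *
  calc ‖Whᵀ * W‖ ≤ ‖Whᵀ * (W - Ws * R)‖ + ‖(Wh - Wsh * R)ᵀ * (Ws * R)‖ := by
        rw [key]; exact norm_add_le _ _
    _ ≤ ‖Whᵀ‖ * ‖W - Ws * R‖ + ‖(Wh - Wsh * R)ᵀ‖ * ‖Ws * R‖ :=
        add_le_add (Matrix.frobenius_norm_mul _ _) (Matrix.frobenius_norm_mul _ _)
    _ = (‖W‖ + ‖Ws‖) * ‖W - Ws * R‖ := by
        rw [Matrix.frobenius_norm_transpose, Matrix.frobenius_norm_transpose, hD, hW, hWs]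
        ring
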